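/- arXiv:1702.07701 — 2 statements merged into one kernel-verified Lean document; each statement's English description precedes it below -/
import Mathlib

section
/- Let k be a division ring and V ⊆ k^n a subset which is simultaneously a left k-subspace and a right k-subspace. Then the left dimension of V equals the right dimension of V. -/
/-!
If `V` is a subspace, the images of the vectors of a basis `b` generate the quotient by `V`, so
those indexed by a suitable `J` form a basis of it. Then `V` and the span of `b '' J` are
complements, and `V` has dimension `#Jᶜ`. Being complements does not involve the scalars, and a set
of standard basis vectors has the same span on the left and on the right, so the same `J` computes
both dimensions.
-/

open Cardinal Module Set Submodule

universe u v

section AddSubmonoid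

variable {ι R M : Type*} [Semiring R] [AddCommMonoid M] [Module R M]

theorem isCompl_toAddSubmonoid_iff {p q : Submodule R M} :
    IsCompl p.toAddSubmonoid q.toAddSubmonoid ↔ IsCompl p q := by
  have inf_toAddSubmonoid : (p ⊓ q).toAddSubmonoid = p.toAddSubmonoid ⊓ q.toAddSubmonoid := rfl
  simp only [isCompl_iff, disjoint_iff, codisjoint_iff, ← toAddSubmonoid_inj, inf_toAddSubmonoid,
    sup_toAddSubmonoid, bot_toAddSubmonoid, top_toAddSubmonoid]

theorem toAddSubmonoid_span_image (v : ι → M) (J : Set ι) :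
    (span R (v '' J)).toAddSubmonoid = ⨆ i ∈ J, (R ∙ v i).toAddSubmonoid := by
  rw [span_eq_iSup_of_singleton_spans, iSup_image]
  simp only [iSup_toAddSubmonoid]

end AddSubmonoid

theorem lift_rank_eq_lift_mk_compl_of_isCompl_span_image {ι : Type u} {R : Type*} {M : Type v}
    [Ring R] [StrongRankCondition R] [AddCommGroup M] [Module R M] (b : Basis ι R M)
    {V : Submodule R M} {J : Set ι} (hVJ : IsCompl V (span R (b '' J))) :
    lift.{u} (Module.rank R V) = lift.{v} #(Jᶜ : Set ι) := by
  have := nontrivial_of_invariantBasisNumber R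
  have hJ : IsCompl (span R (b '' J)) (span R (b '' Jᶜ)) :=
    b.linearIndependent.isCompl_span_image b.span_eq isCompl_compl
  let e : V ≃ₗ[R] span R (b '' Jᶜ) :=
    (quotientEquivOfIsCompl _ _ hVJ.symm).symm ≪≫ₗ quotientEquivOfIsCompl _ _ hJ
  rw [e.rank_eq, rank_span_set (b.linearIndependent.linearIndepOn _).id_image,
    mk_image_eq_lift _ _ b.injective]

theorem exists_isCompl_span_image {ι K M : Type*} [DivisionRing K] [AddCommGroup M] [Module K M]
    {v : ι → M} (hv : span K (range v) = ⊤) (V : Submodule K M) :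
    ∃ J : Set ι, IsCompl V (span K (v '' J)) := by
  obtain ⟨J, -, -, hspan, hJ⟩ :=
    exists_linearIndepOn_extension (linearIndepOn_empty K (V.mkQ ∘ v)) (subset_univ ∅)
  refine ⟨J, ?_, ?_⟩
  · have hdisj : Disjoint (span K (range fun i : J => v i)) (LinearMap.ker V.mkQ) :=
      range_ker_disjoint hJ
    rw [image_eq_range]
    rwa [ker_mkQ, disjoint_comm] at hdisj
  · rw [image_univ, ← span_le, range_comp, image_comp, ← map_span, ← map_span, hv] at hspan
    rw [codisjoint_iff, ← map_mkQ_eq_top, eq_top_iff]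
    simpa only [Submodule.map_top, range_mkQ] using hspan

theorem stmt_3_general {ι K L M : Type*} [DivisionRing K] [Ring L] [StrongRankCondition L]
    [AddCommGroup M] [Module K M] [Module L M] (b : Basis ι K M) (c : Basis ι L M)
    (hbc : ∀ i, ((K ∙ b i : Submodule K M) : Set M) = (L ∙ c i : Submodule L M))
    (V : Submodule K M) (W : Submodule L M) (h : (V : Set M) = W) :
    Module.rank K V = Module.rank L W := by
  obtain ⟨J, hVJ⟩ := exists_isCompl_span_image b.span_eq V
  have hVW : V.toAddSubmonoid = W.toAddSubmonoid := SetLike.coe_injective h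
  have hline (i : ι) : (K ∙ b i).toAddSubmonoid = (L ∙ c i).toAddSubmonoid :=
    SetLike.coe_injective (hbc i)
  have hspan : (span K (b '' J)).toAddSubmonoid = (span L (c '' J)).toAddSubmonoid := by
    simp only [toAddSubmonoid_span_image, hline]
  have hWJ : IsCompl W (span L (c '' J)) := by
    rwa [← isCompl_toAddSubmonoid_iff, ← hVW, ← hspan, isCompl_toAddSubmonoid_iff]
  apply lift_injective
  rw [lift_rank_eq_lift_mk_compl_of_isCompl_span_image b hVJ,
    lift_rank_eq_lift_mk_compl_of_isCompl_span_image c hWJ]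

section StandardBasis

variable (k : Type*) [Semiring k] (ι : Type*) [Finite ι]

/-- The standard basis of `ι → k` as a right `k`-module, the counterpart of `Pi.basisFun`. -/
noncomputable def opBasisFun : Basis ι kᵐᵒᵖ (ι → k) :=
  .ofEquivFun (.piCongrRight fun _ => MulOpposite.opLinearEquiv kᵐᵒᵖ)

variable {ι}

theorem opBasisFun_apply [DecidableEq ι] (i : ι) :
    opBasisFun k ι i = Pi.single i 1 := by
  ext j
  simp [opBasisFun, Pi.single_apply, apply_ite MulOpposite.unop]

theorem coe_span_basisFun_eq_coe_span_opBasisFun (i : ι) :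
    ((k ∙ Pi.basisFun k ι i : Submodule k (ι → k)) : Set (ι → k)) =
      (kᵐᵒᵖ ∙ opBasisFun k ι i : Submodule kᵐᵒᵖ (ι → k)) := by
  classical
  ext x
  simp [mem_span_singleton, MulOpposite.exists, opBasisFun_apply, ← Pi.single_smul]

end StandardBasis

/-- For a two-sided subspace of `k^n` the left and right dimensions coincide. -/
theorem stmt_3 {k : Type*} [DivisionRing k] {n : ℕ}
    (V : Submodule k (Fin n → k)) (W : Submodule kᵐᵒᵖ (Fin n → k))
    (h : (V : Set (Fin n → k)) = (W : Set (Fin n → k))) :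
    Module.finrank k V = Module.finrank kᵐᵒᵖ W :=
  congrArg toNat <| stmt_3_general (Pi.basisFun k (Fin n)) (opBasisFun k (Fin n))
    (coe_span_basisFun_eq_coe_span_opBasisFun k) V W h
end

section
/- Let k be a division ring, n ≥ 3, and P, P' two-sided affine 2-planes in k^n. Then there exists a finite sequence P = P_0, P_1, ..., P_m = P' of two-sided affine 2-planes such that P_i ∩ P_{i−1} is an affine line for each i = 1,...,m. -/
open Function Set

variable {k : Type*}

/-- A set is a left `k`-subspace of `k^n`. -/
def IsLeftSub [DivisionRing k] {n : ℕ} (A : Set (Fin n → k)) : Prop :=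
  ∃ S : Submodule k (Fin n → k), A = (S : Set (Fin n → k))

/-- A set is a right `k`-subspace of `k^n` (right modules encoded via `kᵐᵒᵖ`). -/
def IsRightSub [DivisionRing k] {n : ℕ} (A : Set (Fin n → k)) : Prop :=
  ∃ S : Submodule kᵐᵒᵖ (Fin n → k), A = (S : Set (Fin n → k))

/-- A set is a left affine subspace of `k^n`: a translate of a left subspace. -/
def IsLeftAff [DivisionRing k] {n : ℕ} (A : Set (Fin n → k)) : Prop :=
  ∃ (v : Fin n → k) (S : Submodule k (Fin n → k)), A = (v + ·) '' (S : Set (Fin n → k))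

/-- A set is a right affine subspace of `k^n`: a translate of a right subspace. -/
def IsRightAff [DivisionRing k] {n : ℕ} (A : Set (Fin n → k)) : Prop :=
  ∃ (v : Fin n → k) (S : Submodule kᵐᵒᵖ (Fin n → k)), A = (v + ·) '' (S : Set (Fin n → k))

/-- `A` is a left affine subspace of dimension `d`. -/
def HasDimL [DivisionRing k] {n : ℕ} (A : Set (Fin n → k)) (d : ℕ) : Prop :=
  ∃ (v : Fin n → k) (S : Submodule k (Fin n → k)),
    A = (v + ·) '' (S : Set (Fin n → k)) ∧ Module.finrank k S = d

/-- `A` is a right affine subspace of dimension `d`. -/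
def HasDimR [DivisionRing k] {n : ℕ} (A : Set (Fin n → k)) (d : ℕ) : Prop :=
  ∃ (v : Fin n → k) (S : Submodule kᵐᵒᵖ (Fin n → k)),
    A = (v + ·) '' (S : Set (Fin n → k)) ∧ Module.finrank kᵐᵒᵖ S = d

/-!
A two-sided subspace of `k^n` is spanned by vectors whose coordinates commute with `k`: if `z` has
minimal support in it and some coordinate equal to `1`, then `c z - z c` has smaller support, so it
vanishes. Conversely any two independent central vectors span a two-sided plane. Hence a central
vector can be completed, by a central vector of a given two-sided plane `S`, to a two-sided plane
meeting `S`. One such plane joins `v + S` to `v + T`, and one containing `u` joins `v + S` to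
`v + u + S` whenever `u` is a multiple of a coordinate vector; these `u` add up to all of `k^n`.
-/

open MulOpposite Submodule
open scoped Pointwise

section Bimodule

variable {M : Type*}

/-- An element `x` of a `k`-bimodule is central if `x c = c x` for all `c : k`, the right action
being encoded as an action of `kᵐᵒᵖ`. -/
def IsCentralVector (k : Type*) [SMul k M] [SMul kᵐᵒᵖ M] (x : M) : Prop :=
  ∀ c : k, op c • x = c • x

/-- A left subspace of a `k`-bimodule is two-sided if it is also closed under the right action,
i.e. if it is a sub-bimodule. -/
def IsTwoSided [Semiring k] [AddCommMonoid M] [Module k M] [SMul kᵐᵒᵖ M]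
    (S : Submodule k M) : Prop :=
  ∀ (c : k) ⦃x : M⦄, x ∈ S → op c • x ∈ S

theorem smul_mem_span_of_forall_smul_mem_span {R R' : Type*} [Semiring R] [AddCommMonoid M]
    [Module R M] [DistribSMul R' M] [SMulCommClass R' R M] {s : Set M} {c : R'}
    (hs : ∀ x ∈ s, c • x ∈ span R s) {x : M} (hx : x ∈ span R s) : c • x ∈ span R s :=
  (span_le (p := (span R s).comap (DistribSMul.toLinearMap R M c))).2 hs hx

section Semiring

variable [Semiring k] [AddCommMonoid M] [Module k M] [Module kᵐᵒᵖ M]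

/-- The right subspace underlying a two-sided subspace. -/
def IsTwoSided.toRight {S : Submodule k M} (hS : IsTwoSided S) : Submodule kᵐᵒᵖ M where
  carrier := S
  add_mem' := S.add_mem
  zero_mem' := S.zero_mem
  smul_mem' c _ hx := hS c.unop hx

theorem IsTwoSided.inf {S T : Submodule k M} (hS : IsTwoSided S) (hT : IsTwoSided T) :
    IsTwoSided (S ⊓ T) :=
  fun c _ hx ↦ ⟨hS c hx.1, hT c hx.2⟩

variable [SMulCommClass k kᵐᵒᵖ M] {s : Set M}

theorem isTwoSided_span (hs : ∀ x ∈ s, IsCentralVector k x) : IsTwoSided (span k s) := by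
  have := SMulCommClass.symm k kᵐᵒᵖ M
  refine fun c _ hx ↦ smul_mem_span_of_forall_smul_mem_span (fun x hxs ↦ ?_) hx
  rw [hs x hxs c]
  exact smul_mem _ c (subset_span hxs)

theorem IsTwoSided.toRight_eq_span {S : Submodule k M} (hS : IsTwoSided S)
    (hs : ∀ x ∈ s, IsCentralVector k x) (hspan : span k s = S) :
    hS.toRight = span kᵐᵒᵖ s := by
  subst hspan
  refine le_antisymm (fun x (hx : x ∈ span k s) ↦ ?_) (span_le.2 subset_span)
  induction hx using span_induction with
  | mem x hx => exact subset_span hx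
  | zero => exact zero_mem _
  | add x y _ _ hx hy => exact add_mem hx hy
  | smul c x _ hx =>
    refine smul_mem_span_of_forall_smul_mem_span (fun y hy ↦ ?_) hx
    rw [← hs y hy c]
    exact smul_mem _ (op c) (subset_span hy)

end Semiring

theorem linearIndepOn_op_of_isCentralVector [Ring k] [AddCommGroup M] [Module k M]
    [Module kᵐᵒᵖ M] {s : Set M} (hs : ∀ x ∈ s, IsCentralVector k x)
    (hli : LinearIndepOn k id s) : LinearIndepOn kᵐᵒᵖ id s := by
  rw [LinearIndepOn, linearIndependent_iff'] at hli ⊢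
  intro t g hg i hi
  refine unop_injective (hli t (fun j ↦ (g j).unop) ?_ i hi)
  rw [← hg]
  exact Finset.sum_congr rfl fun j _ ↦ (hs j j.2 (g j).unop).symm

theorem IsTwoSided.finrank_toRight [DivisionRing k] [AddCommGroup M] [Module k M]
    [Module kᵐᵒᵖ M] [SMulCommClass k kᵐᵒᵖ M] {S : Submodule k M} (hS : IsTwoSided S)
    (hspan : span k {x | x ∈ S ∧ IsCentralVector k x} = S) :
    Module.finrank kᵐᵒᵖ hS.toRight = Module.finrank k S := by
  obtain ⟨b, hb, hbspan, hli⟩ := exists_linearIndependent k {x | x ∈ S ∧ IsCentralVector k x}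
  have hcentral : ∀ x ∈ b, IsCentralVector k x := fun x hx ↦ (hb hx).2
  have hbS : span k b = S := hbspan.trans hspan
  rw [hS.toRight_eq_span hcentral hbS, Module.finrank,
    rank_span_set (linearIndepOn_op_of_isCentralVector hcentral hli), ← rank_span_set hli, hbS,
    Module.finrank]

end Bimodule

section CentralVectors

variable [DivisionRing k] {ι : Type*} {S : Submodule k (ι → k)}

theorem isCentralVector_single_one [DecidableEq ι] (i : ι) :
    IsCentralVector k (Pi.single i 1 : ι → k) := by
  intro c
  rw [← Pi.single_smul, ← Pi.single_smul, op_smul_eq_mul, smul_eq_mul, one_mul, mul_one]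

theorem IsTwoSided.isCentralVector_of_support_minimal (hS : IsTwoSided S) {z : ι → k}
    (hz : z ∈ S) (hmin : ∀ y ∈ S, support y ⊂ support z → y = 0) {i : ι} (hi : z i = 1) :
    IsCentralVector k z := by
  intro c
  refine sub_eq_zero.1 (hmin _ (S.sub_mem (hS c hz) (S.smul_mem c hz)) ?_)
  refine ssubset_of_subset_of_ne ?_ fun h ↦ ?_
  · intro j hj hzj
    simp [hzj] at hj
  · have : i ∈ support z := by simp [hi]
    simp [← h, hi] at this

variable [Finite ι]

theorem IsTwoSided.exists_isCentralVector_support_subset (hS : IsTwoSided S) {x : ι → k}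
    (hx : x ∈ S) (hx0 : x ≠ 0) :
    ∃ z ∈ S, IsCentralVector k z ∧ support z ⊆ support x ∧ ∃ i, z i = 1 := by
  obtain ⟨_, hyx, ⟨y, hyS, hy0, rfl⟩, hmin⟩ := exists_minimal_le_of_wellFoundedLT
    (fun t ↦ ∃ y ∈ S, y ≠ 0 ∧ support y = t) (support x) ⟨x, hx, hx0, rfl⟩
  obtain ⟨i, hi⟩ := Function.ne_iff.1 hy0
  have hsupp : support ((y i)⁻¹ • y) = support y :=
    support_const_smul_of_ne_zero _ _ (inv_ne_zero hi)
  have hone : ((y i)⁻¹ • y) i = 1 := inv_mul_cancel₀ hi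
  have hzS : (y i)⁻¹ • y ∈ S := S.smul_mem _ hyS
  refine ⟨_, hzS, hS.isCentralVector_of_support_minimal hzS ?_ hone,
    hsupp.trans_subset hyx, i, hone⟩
  intro w hw hwy
  by_contra hw0
  rw [hsupp] at hwy
  exact hwy.not_subset (hmin ⟨w, hw, hw0, rfl⟩ hwy.subset)

theorem IsTwoSided.exists_isCentralVector_ne_zero (hS : IsTwoSided S) (hS0 : S ≠ ⊥) :
    ∃ z ∈ S, IsCentralVector k z ∧ z ≠ 0 := by
  obtain ⟨x, hx, hx0⟩ := exists_mem_ne_zero_of_ne_bot hS0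
  obtain ⟨z, hzS, hz, -, i, hi⟩ := hS.exists_isCentralVector_support_subset hx hx0
  exact ⟨z, hzS, hz, Function.ne_iff.2 ⟨i, by simp [hi]⟩⟩

theorem IsTwoSided.span_isCentralVector_eq (hS : IsTwoSided S) :
    span k {x | x ∈ S ∧ IsCentralVector k x} = S := by
  refine le_antisymm (span_le.2 fun _ hx ↦ hx.1) fun x hx ↦ ?_
  induction hsupp : support x using WellFoundedLT.induction generalizing x with
  | _ t ih =>
    subst hsupp
    obtain rfl | hx0 := eq_or_ne x 0
    · exact zero_mem _
    obtain ⟨z, hzS, hz, hzx, i, hi⟩ := hS.exists_isCentralVector_support_subset hx hx0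
    have hsmaller : support (x - x i • z) ⊂ support x := by
      refine (ssubset_iff_of_subset fun j hj hxj ↦ ?_).2 ⟨i, hzx (by simp [hi]), by simp [hi]⟩
      have hzj : z j = 0 := notMem_support.1 fun h ↦ hzx h hxj
      simp [hxj, hzj] at hj
    rw [← sub_add_cancel x (x i • z)]
    exact add_mem (ih _ hsmaller _ (S.sub_mem hx (S.smul_mem _ hzS)) rfl)
      (smul_mem _ _ (subset_span ⟨hzS, hz⟩))

theorem IsTwoSided.exists_plane_mem_inf_ne_bot (hS : IsTwoSided S)
    (hS2 : Module.finrank k S = 2) {u : ι → k} (hu : IsCentralVector k u) :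
    ∃ W : Submodule k (ι → k), IsTwoSided W ∧ Module.finrank k W = 2 ∧ u ∈ W ∧ S ⊓ W ≠ ⊥ := by
  have hS0 : S ≠ ⊥ := one_le_finrank_iff.1 (by omega)
  by_cases huS : u ∈ S
  · exact ⟨S, hS, hS2, huS, by rwa [inf_idem]⟩
  obtain ⟨a, haS, ha, ha0⟩ := hS.exists_isCentralVector_ne_zero hS0
  have hli : LinearIndependent k ![a, u] :=
    (LinearIndependent.pair_iff' ha0).2 fun c hc ↦ huS (hc ▸ S.smul_mem c haS)
  refine ⟨span k (range ![a, u]), isTwoSided_span ?_, ?_, subset_span ⟨1, rfl⟩,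
    (Submodule.ne_bot_iff _).2 ⟨a, ⟨haS, subset_span ⟨0, rfl⟩⟩, ha0⟩⟩
  · rintro _ ⟨i, rfl⟩
    fin_cases i
    exacts [ha, hu]
  · simpa using finrank_span_eq_card hli

end CentralVectors

section Affine

variable [DivisionRing k] {n : ℕ} {S T : Submodule k (Fin n → k)}

/-- `A` is a two-sided affine subspace of `k^n` of dimension `d`. -/
def IsTwoSidedAffine (A : Set (Fin n → k)) (d : ℕ) : Prop :=
  HasDimL A d ∧ HasDimR A d

theorem IsTwoSided.isTwoSidedAffine_vadd (hS : IsTwoSided S) (v : Fin n → k) :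
    IsTwoSidedAffine (v +ᵥ (S : Set (Fin n → k))) (Module.finrank k S) :=
  ⟨⟨v, S, rfl, rfl⟩, ⟨v, hS.toRight, rfl, hS.finrank_toRight hS.span_isCentralVector_eq⟩⟩

theorem IsTwoSidedAffine.exists_eq_vadd {A : Set (Fin n → k)} {d : ℕ}
    (hA : IsTwoSidedAffine A d) :
    ∃ (v : Fin n → k) (S : Submodule k (Fin n → k)),
      IsTwoSided S ∧ Module.finrank k S = d ∧ A = v +ᵥ (S : Set (Fin n → k)) := by
  obtain ⟨⟨v, S, rfl, hd⟩, w, T, hST, -⟩ := hA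
  change v +ᵥ (S : Set (Fin n → k)) = w +ᵥ (T : Set (Fin n → k)) at hST
  obtain ⟨t, ht, rfl⟩ : v ∈ w +ᵥ (T : Set (Fin n → k)) :=
    hST ▸ ⟨0, S.zero_mem, add_zero v⟩
  have hcoe : (S : Set (Fin n → k)) = T := by
    refine vadd_left_cancel (w + t) (hST.trans ?_)
    rw [← vadd_vadd, vadd_coe_set ht]
  refine ⟨_, S, fun c x hx ↦ ?_, hd, rfl⟩
  rw [← SetLike.mem_coe, hcoe] at hx ⊢
  exact T.smul_mem (op c) hx

/-- The graph whose vertices are the two-sided affine planes of `k^n`, two of them being adjacent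
when they meet in a two-sided affine line. -/
def twoSidedPlaneGraph (k : Type*) [DivisionRing k] (n : ℕ) :
    SimpleGraph {P : Set (Fin n → k) // IsTwoSidedAffine P 2} where
  Adj P Q := P ≠ Q ∧ IsTwoSidedAffine (P ∩ Q : Set (Fin n → k)) 1
  symm := ⟨fun P Q h ↦ ⟨h.1.symm, Set.inter_comm (P : Set (Fin n → k)) Q ▸ h.2⟩⟩
  loopless := ⟨fun _ h ↦ h.1 rfl⟩

/-- The translate `v + S` of a two-sided linear plane, as a vertex of `twoSidedPlaneGraph`. -/
def IsTwoSided.planeThrough (hS : IsTwoSided S) (hS2 : Module.finrank k S = 2) (v : Fin n → k) :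
    {P : Set (Fin n → k) // IsTwoSidedAffine P 2} :=
  ⟨v +ᵥ (S : Set (Fin n → k)), hS2 ▸ hS.isTwoSidedAffine_vadd v⟩

theorem IsTwoSided.planeThrough_add (hS : IsTwoSided S) (hS2 : Module.finrank k S = 2)
    (v : Fin n → k) {u : Fin n → k} (hu : u ∈ S) :
    hS.planeThrough hS2 (v + u) = hS.planeThrough hS2 v :=
  Subtype.ext ((vadd_vadd v u (S : Set (Fin n → k))).symm.trans
    (congrArg (v +ᵥ ·) (vadd_coe_set hu)))

theorem reachable_planeThrough_of_inf_ne_bot (hS : IsTwoSided S) (hS2 : Module.finrank k S = 2)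
    (hT : IsTwoSided T) (hT2 : Module.finrank k T = 2) (hST : S ⊓ T ≠ ⊥) (v : Fin n → k) :
    (twoSidedPlaneGraph k n).Reachable (hS.planeThrough hS2 v) (hT.planeThrough hT2 v) := by
  obtain rfl | hne := eq_or_ne S T
  · rfl
  have hpos : 1 ≤ Module.finrank k ↥(S ⊓ T) := one_le_finrank_iff.2 hST
  have hlt : Module.finrank k ↥(S ⊓ T) < Module.finrank k S := by
    refine finrank_lt_finrank_of_lt (inf_lt_left.2 fun h ↦ hne ?_)
    exact eq_of_le_of_finrank_eq h (hS2.trans hT2.symm)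
  have hline : Module.finrank k ↥(S ⊓ T) = 1 := by omega
  refine SimpleGraph.Adj.reachable ⟨fun h ↦ hne ?_, ?_⟩
  · exact SetLike.coe_injective (vadd_left_cancel v (congrArg Subtype.val h))
  · have := (hS.inf hT).isTwoSidedAffine_vadd v
    rwa [hline, coe_inf, Set.vadd_set_inter] at this

theorem reachable_planeThrough_direction (hS : IsTwoSided S) (hS2 : Module.finrank k S = 2)
    (hT : IsTwoSided T) (hT2 : Module.finrank k T = 2) (v : Fin n → k) :
    (twoSidedPlaneGraph k n).Reachable (hS.planeThrough hS2 v) (hT.planeThrough hT2 v) := by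
  obtain ⟨b, hbT, hb, hb0⟩ :=
    hT.exists_isCentralVector_ne_zero (one_le_finrank_iff.1 (by omega))
  obtain ⟨W, hW, hW2, hbW, hSW⟩ := hS.exists_plane_mem_inf_ne_bot hS2 hb
  have hWT : W ⊓ T ≠ ⊥ := (Submodule.ne_bot_iff _).2 ⟨b, ⟨hbW, hbT⟩, hb0⟩
  exact (reachable_planeThrough_of_inf_ne_bot hS hS2 hW hW2 hSW v).trans
    (reachable_planeThrough_of_inf_ne_bot hW hW2 hT hT2 hWT v)

theorem reachable_planeThrough_add (hS : IsTwoSided S) (hS2 : Module.finrank k S = 2)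
    (v u : Fin n → k) :
    (twoSidedPlaneGraph k n).Reachable (hS.planeThrough hS2 v)
      (hS.planeThrough hS2 (v + u)) := by
  induction u using Pi.single_induction generalizing v with
  | zero => rw [add_zero]
  | add u w hu hw =>
    rw [← add_assoc]
    exact (hu v).trans (hw (v + u))
  | single i c =>
    obtain ⟨W, hW, hW2, hiW, hSW⟩ :=
      hS.exists_plane_mem_inf_ne_bot hS2 (isCentralVector_single_one i)
    have hicW : Pi.single i c ∈ W := by
      simpa [← Pi.single_smul] using W.smul_mem c hiW
    have htoW := reachable_planeThrough_of_inf_ne_bot hS hS2 hW hW2 hSW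
    have hback := (htoW (v + Pi.single i c)).symm
    rw [hW.planeThrough_add hW2 v hicW] at hback
    exact (htoW v).trans hback

theorem twoSidedPlaneGraph_preconnected (k : Type*) [DivisionRing k] (n : ℕ) :
    (twoSidedPlaneGraph k n).Preconnected := by
  rintro ⟨P, hP⟩ ⟨P', hP'⟩
  obtain ⟨v, S, hS, hS2, rfl⟩ := hP.exists_eq_vadd
  obtain ⟨w, T, hT, hT2, rfl⟩ := hP'.exists_eq_vadd
  have htranslate := reachable_planeThrough_add hS hS2 v (w - v)
  rw [add_sub_cancel] at htranslate
  exact htranslate.trans (reachable_planeThrough_direction hS hS2 hT hT2 w)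

end Affine

/-- Lemma (purelyleftinplanes, connectivity step): for `n ≥ 3`, any two two-sided
affine 2-planes in `k^n` are connected by a chain of two-sided affine 2-planes in
which consecutive members meet in an affine line. -/
theorem stmt_13 [DivisionRing k] {n : ℕ} (hn : 3 ≤ n)
    (P P' : Set (Fin n → k))
    (hP : HasDimL P 2 ∧ HasDimR P 2) (hP' : HasDimL P' 2 ∧ HasDimR P' 2) :
    ∃ (m : ℕ) (Q : ℕ → Set (Fin n → k)), Q 0 = P ∧ Q m = P' ∧
      (∀ i, i ≤ m → HasDimL (Q i) 2 ∧ HasDimR (Q i) 2) ∧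
      (∀ i, 1 ≤ i → i ≤ m → HasDimL (Q i ∩ Q (i - 1)) 1 ∨ HasDimR (Q i ∩ Q (i - 1)) 1) := by
  obtain ⟨walk⟩ := twoSidedPlaneGraph_preconnected k n ⟨P, hP⟩ ⟨P', hP'⟩
  refine ⟨walk.length, fun i ↦ walk.getVert i, by simp, by simp,
    fun i _ ↦ (walk.getVert i).2, fun i hi him ↦ ?_⟩
  have hadj := walk.adj_getVert_succ (i := i - 1) (by omega)
  rw [Nat.sub_add_cancel hi] at hadj
  exact Or.inl hadj.symm.2.1
end
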